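/- arXiv:2108.12312 — 2 statements merged into one kernel-verified Lean document; each statement's English description precedes it below -/
import Mathlib

section
/- Let p, q ∈ R be idempotents. Then p*q is group invertible if and only if q1 is group invertible and q1^π * q2 = 0. In this case (p*q)^# = q1^# + (q1^#)^2 * q2. -/
/-!
Put `a = p * q`, so that `q1 = a * p`, `q2 = a * (1 - p)` and `a = q1 + q2`, where `q2 * q1 = 0`
and `q2 * q2 = 0` because `p * a = a`.

If `c` is the group inverse of `a`, then `p * c = c` (as `c = a * c * c`), and `c * p` is a group
inverse of `a * p = q1` (`IsGroupInvOf.mul_right_of_left_id`). Moreover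
`q1 * (c * p) * q2 = a * c * a * (1 - p) = q2`, that is, the spectral idempotent of `q1` kills `q2`.
Conversely, if `d` is the group inverse of `q1` and `q1 * d * q2 = q2`, then `d + d ^ 2 * q2` is a
group inverse of `q1 + q2` (`IsGroupInvOf.add_of_mul_eq_zero`). The formula for the group inverse
follows from uniqueness.
-/

variable {R : Type*} [Ring R]

/-- `c` is a group inverse of `a`. -/
def IsGroupInvOf (a c : R) : Prop := a * c * a = a ∧ c * a * c = c ∧ a * c = c * a

/-- `a` is group invertible. -/
def GroupInvertible (a : R) : Prop := ∃ c, IsGroupInvOf a c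

/-- The group inverse `a^#` (junk value `0` if it does not exist). -/
noncomputable def gi (a : R) : R :=
  haveI := Classical.dec (GroupInvertible a)
  if h : GroupInvertible a then h.choose else 0

/-- The spectral idempotent `a^π = 1 - a * a^#`. -/
noncomputable def sp (a : R) : R := 1 - a * gi a

theorem IsGroupInvOf.unique {a c d : R} (hc : IsGroupInvOf a c) (hd : IsGroupInvOf a d) :
    c = d := by
  obtain ⟨hc1, hc2, hc3⟩ := hc
  obtain ⟨hd1, hd2, hd3⟩ := hd
  have key : a * c = a * d := by
    calc a * c = a * d * a * c := by rw [hd1]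
      _ = d * a * (c * a) := by rw [mul_assoc (a * d), hd3, hc3]
      _ = d * (a * c * a) := by simp only [mul_assoc]
      _ = a * d := by rw [hc1, hd3]
  calc c = c * (a * c) := by rw [← mul_assoc, hc2]
    _ = a * c * d := by rw [key, ← mul_assoc, ← hc3, key]
    _ = d := by rw [key, hd3, hd2]

theorem isGroupInvOf_gi {a : R} (h : GroupInvertible a) : IsGroupInvOf a (gi a) := by
  unfold gi
  rw [dif_pos h]
  exact h.choose_spec

theorem IsGroupInvOf.gi_eq {a c : R} (h : IsGroupInvOf a c) : gi a = c :=
  (isGroupInvOf_gi ⟨c, h⟩).unique h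

theorem IsGroupInvOf.eq_mul_mul {a c : R} (h : IsGroupInvOf a c) : a * (c * c) = c := by
  rw [← mul_assoc, h.2.2, h.2.1]

/-- Cutting down on the right by `p`, when `p` acts as a left identity on `a`. -/
theorem IsGroupInvOf.mul_right_of_left_id {a c p : R} (h : IsGroupInvOf a c) (hpa : p * a = a) :
    IsGroupInvOf (a * p) (c * p) := by
  have hpc : p * c = c := by
    rw [← h.eq_mul_mul, ← mul_assoc, hpa]
  obtain ⟨h1, h2, h3⟩ := h
  have e1 : a * p * (c * p) = a * c * p := by
    rw [mul_assoc a, ← mul_assoc p, hpc, mul_assoc]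
  have e2 : c * p * (a * p) = c * a * p := by
    rw [mul_assoc c, ← mul_assoc p, hpa, mul_assoc]
  refine ⟨?_, ?_, ?_⟩
  · rw [e1, mul_assoc (a * c), ← mul_assoc p, hpa, ← mul_assoc, h1]
  · rw [e2, mul_assoc (c * a), ← mul_assoc p, hpc, ← mul_assoc, h2]
  · rw [e1, e2, h3]

/-- The group inverse of the block upper triangular element with blocks `x`, `y` and zero
bottom row. -/
theorem IsGroupInvOf.add_of_mul_eq_zero {x y d : R} (h : IsGroupInvOf x d) (hyx : y * x = 0)
    (hyy : y * y = 0) (hxy : x * d * y = y) : IsGroupInvOf (x + y) (d + d ^ 2 * y) := by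
  have hyd : y * d = 0 := by
    rw [← h.eq_mul_mul, ← mul_assoc, hyx, zero_mul]
  have hxdd := h.eq_mul_mul
  obtain ⟨h1, h2, h3⟩ := h
  have e1 : (x + y) * (d + d ^ 2 * y) = x * d + d * y := by
    calc (x + y) * (d + d ^ 2 * y)
        = x * d + x * (d * d) * y + y * d + y * d * d * y := by noncomm_ring
      _ = x * d + d * y := by rw [hxdd, hyd]; simp
  have e2 : (d + d ^ 2 * y) * (x + y) = x * d + d * y := by
    calc (d + d ^ 2 * y) * (x + y)
        = d * x + d * y + d ^ 2 * (y * x) + d ^ 2 * (y * y) := by noncomm_ring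
      _ = x * d + d * y := by rw [hyx, hyy, h3]; simp
  refine ⟨?_, ?_, e1.trans e2.symm⟩
  · rw [e1]
    calc (x * d + d * y) * (x + y)
        = x * d * x + x * d * y + d * (y * x) + d * (y * y) := by noncomm_ring
      _ = x + y := by rw [h1, hxy, hyx, hyy]; simp
  · rw [e2]
    calc (x * d + d * y) * (d + d ^ 2 * y)
        = x * (d * d) + x * (d * d) * d * y + d * (y * d) + d * (y * d) * d * y := by noncomm_ring
      _ = d + d ^ 2 * y := by rw [hxdd, hyd]; simp [pow_two]

theorem group_inv_pq (p q q1 q2 q3 q4 : R) (hp : p * p = p) (hq : q * q = q)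
    (h1 : q1 = p * q * p) (h2 : q2 = p * q * (1 - p))
    (h3 : q3 = (1 - p) * q * p) (h4 : q4 = (1 - p) * q * (1 - p)) :
    (GroupInvertible (p * q) ↔ GroupInvertible q1 ∧ sp q1 * q2 = 0) ∧
    (GroupInvertible (p * q) → gi (p * q) = gi q1 + (gi q1) ^ 2 * q2) := by
  have hpa : p * (p * q) = p * q := by rw [← mul_assoc, hp]
  have hsum : p * q = q1 + q2 := by rw [h1, h2]; noncomm_ring
  have hz : (1 - p) * (p * q) = 0 := by rw [sub_mul, hpa, one_mul, sub_self]
  have h21 : q2 * q1 = 0 := by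
    rw [h1, h2, mul_assoc, ← mul_assoc (1 - p), hz, zero_mul, mul_zero]
  have h22 : q2 * q2 = 0 := by
    rw [h2, mul_assoc, ← mul_assoc (1 - p), hz, zero_mul, mul_zero]
  have fwd : GroupInvertible (p * q) → GroupInvertible q1 ∧ sp q1 * q2 = 0 := by
    rintro ⟨c, hc⟩
    have hd := hc.mul_right_of_left_id hpa
    rw [← h1] at hd
    refine ⟨⟨_, hd⟩, ?_⟩
    have hq1c : q1 * (c * p) * q2 = q2 := by
      have hpc : p * c = c := by rw [← hc.eq_mul_mul, ← mul_assoc, hpa]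
      calc q1 * (c * p) * q2 = p * q * (p * c) * (p * (p * q)) * (1 - p) := by
            rw [h1, h2]; noncomm_ring
        _ = q2 := by rw [hpc, hpa, hc.1, h2]
    rw [sp, hd.gi_eq, sub_mul, one_mul, hq1c, sub_self]
  have bwd : GroupInvertible q1 ∧ sp q1 * q2 = 0 →
      IsGroupInvOf (p * q) (gi q1 + (gi q1) ^ 2 * q2) := by
    rintro ⟨hg, hs⟩
    rw [hsum]
    refine (isGroupInvOf_gi hg).add_of_mul_eq_zero h21 h22 ?_
    rw [sp, sub_mul, one_mul, sub_eq_zero] at hs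
    exact hs.symm
  exact ⟨⟨fwd, fun h => ⟨_, bwd h⟩⟩, fun h => (bwd (fwd h)).gi_eq⟩
end

section
/- Let p, q ∈ R be idempotents such that p - q is group invertible. Then f, g and h are idempotents, f*R = (p*h)*R = (p-q1)*R, and g° = (p*h)° = (p-q1)°. -/
/-!
Write `a = p - q` and `c = a^#`. Since `p` and `q` are idempotent, `p * a² = a² * p = p - p * q * p`.
The element `c²` is the group inverse of `a²`, and a group inverse commutes with everything its
element commutes with, so `p` commutes with `c²` and hence with `h = c * a = c² * a²`.
From `c = c² * a` and `p * a * p = a² * p` one gets `p * c * p = h * p`, which gives the idempotency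
of `f = p * c` and `g = c * p`. As `h` is a two-sided unit for `c`, the elements `p * c`, `p * h` and
`p * a²` are right multiples of one another, and dually `c * p`, `h * p` and `a² * p` are left
multiples of one another; this yields the equalities of right ideals and of annihilators.
-/

variable {R : Type*} [Ring R]

/-- The right multiples `x*R`. -/
def rMul (x : R) : Set R := {z | ∃ y, z = x * y}

/-- The right annihilator `x°`. -/
def rAnn (x : R) : Set R := {y | x * y = 0}

theorem gi_spec {a : R} (ha : GroupInvertible a) : IsGroupInvOf a (gi a) := by
  unfold gi
  rw [dif_pos ha]
  exact ha.choose_spec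

theorem IsGroupInvOf.sq {a c : R} (h : IsGroupInvOf a c) : IsGroupInvOf (a * a) (c * c) := by
  obtain ⟨h1, h2, h3⟩ := h
  have e1 : a * a * (c * c) = a * c := by
    calc a * a * (c * c) = a * (a * c) * c := by noncomm_ring
      _ = a * (c * a) * c := by rw [h3]
      _ = a * c * a * c := by noncomm_ring
      _ = a * c := by rw [h1]
  have e2 : c * c * (a * a) = a * c := by
    calc c * c * (a * a) = c * (c * a) * a := by noncomm_ring
      _ = c * (a * c) * a := by rw [h3]
      _ = c * a * c * a := by noncomm_ring
      _ = a * c := by rw [h2, h3]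
  refine ⟨?_, ?_, e1.trans e2.symm⟩
  · rw [e1, ← mul_assoc, h1]
  · rw [e2, ← mul_assoc, h3, h2]

/-- The group inverse lies in the double commutant. -/
theorem IsGroupInvOf.comm {a c x : R} (h : IsGroupInvOf a c) (hx : x * a = a * x) :
    x * c = c * x := by
  obtain ⟨h1, h2, h3⟩ := h
  -- Both sides equal `c * a * x * c`.
  have e1 : x * c = c * a * x * c := by
    calc x * c = x * (c * a * c) := by rw [h2]
      _ = x * a * c * c := by rw [← h3]; noncomm_ring
      _ = a * c * a * x * c * c := by rw [hx, h1]
      _ = a * c * (a * x) * c * c := by noncomm_ring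
      _ = c * a * (x * a) * c * c := by rw [hx, h3]
      _ = c * a * x * (a * c * c) := by noncomm_ring
      _ = c * a * x * c := by rw [h3, h2]
  have e2 : c * x = c * a * x * c := by
    calc c * x = c * a * c * x := by rw [h2]
      _ = c * (a * c) * x := by noncomm_ring
      _ = c * (c * a) * x := by rw [h3]
      _ = c * c * (a * x) := by noncomm_ring
      _ = c * c * (x * (a * c * a)) := by rw [← hx, h1]
      _ = c * c * (x * (a * (a * c))) := by rw [mul_assoc a c a, h3]
      _ = c * c * (x * a) * (a * c) := by noncomm_ring
      _ = c * c * (a * x) * (a * c) := by rw [hx]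
      _ = c * (c * a) * (x * a) * c := by noncomm_ring
      _ = c * (a * c) * (a * x) * c := by rw [h3, hx]
      _ = c * a * c * (a * x) * c := by noncomm_ring
      _ = c * a * x * c := by rw [h2, ← mul_assoc c a x]
  rw [e1, e2]

theorem rMul_eq {x y u v : R} (hx : x = y * u) (hy : y = x * v) : rMul x = rMul y := by
  ext z
  constructor
  · rintro ⟨w, rfl⟩
    exact ⟨u * w, by rw [← mul_assoc, ← hx]⟩
  · rintro ⟨w, rfl⟩
    exact ⟨v * w, by rw [← mul_assoc, ← hy]⟩

theorem rAnn_eq {x y u v : R} (hx : x = u * y) (hy : y = v * x) : rAnn x = rAnn y := by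
  ext z
  constructor
  · intro (hz : x * z = 0)
    show y * z = 0
    rw [hy, mul_assoc, hz, mul_zero]
  · intro (hz : y * z = 0)
    show x * z = 0
    rw [hx, mul_assoc, hz, mul_zero]

theorem fgh_idempotents (p q q1 f g h : R) (hp : p * p = p) (hq : q * q = q)
    (h1 : q1 = p * q * p) (hpq : GroupInvertible (p - q))
    (hf : f = p * gi (p - q)) (hg : g = gi (p - q) * p)
    (hh : h = gi (p - q) * (p - q)) :
    f * f = f ∧ g * g = g ∧ h * h = h ∧
      rMul f = rMul (p * h) ∧ rMul f = rMul (p - q1) ∧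
      rAnn g = rAnn (p * h) ∧ rAnn g = rAnn (p - q1) := by
  have hgi := gi_spec hpq
  generalize gi (p - q) = c at *
  have hpa : p - q1 = p * ((p - q) * (p - q)) := by
    have : p * ((p - q) * (p - q)) = p * p * p - p * p * q - p * q * p + p * (q * q) := by
      noncomm_ring
    rw [this, hq, hp, hp, h1]; abel
  have hap : p - q1 = (p - q) * (p - q) * p := by
    have : (p - q) * (p - q) * p = p * p * p - p * q * p - q * (p * p) + q * q * p := by
      noncomm_ring
    rw [this, hq, hp, hp, h1]; abel
  have hpap : p * (p - q) * p = p - q1 := by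
    have : p * (p - q) * p = p * p * p - p * q * p := by noncomm_ring
    rw [this, hp, hp, h1]
  generalize p - q = a at *
  have hpc : p * (c * c) = c * c * p := hgi.sq.comm (hpa.symm.trans hap)
  obtain ⟨g1, g2, g3⟩ := hgi
  have hcc : c * c * a = c := by rw [mul_assoc, ← g3, ← mul_assoc, g2]
  have hc : h * c = c := by rw [hh, g2]
  have ch : c * h = c := by rw [hh, ← mul_assoc, hcc]
  have hah : h * a = a := by rw [hh, ← g3, g1]
  have hha : a * h = a := by rw [hh, ← mul_assoc, g1]
  have hh2 : h * h = h := by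
    calc h * h = h * c * a := by rw [mul_assoc, ← hh]
      _ = h := by rw [hc, hh]
  have hccaa : c * c * (a * a) = h := by rw [← mul_assoc, hcc, hh]
  have hpcp : p * c * p = h * p := by
    calc p * c * p = p * (c * c) * a * p := by rw [mul_assoc p (c * c) a, hcc]
      _ = c * c * (p * a * p) := by rw [hpc]; noncomm_ring
      _ = h * p := by rw [hpap, hap, ← mul_assoc, hccaa]
  have hph : p * h = h * p := by
    calc p * h = p * (c * c) * (a * a) := by rw [mul_assoc, hccaa]
      _ = c * c * (p * (a * a)) := by rw [hpc]; noncomm_ring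
      _ = h * p := by rw [← hpa, hap, ← mul_assoc, hccaa]
  have haac : a * a * c = a := by rw [mul_assoc, g3, ← mul_assoc, g1]
  have hfh : f = p * h * c := by rw [hf, mul_assoc, hc]
  have hhf : p * h = f * a := by rw [hf, hh, mul_assoc]
  have hgh : g = c * (p * h) := by rw [hg, hph, ← mul_assoc, ch]
  have hhg : p * h = a * g := by rw [hph, hg, hh, ← mul_assoc, g3]
  have hfa : f = (p - q1) * (c * c * c) := by
    calc f = p * (a * c * c) := by rw [g3, g2, hf]
      _ = p * (a * a * c * c * c) := by rw [haac]
      _ = (p - q1) * (c * c * c) := by rw [hpa]; noncomm_ring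
  have haf : p - q1 = f * (a * a * a) := by
    calc p - q1 = p * (h * a * a) := by rw [hah, hpa]
      _ = f * (a * a * a) := by rw [hf, hh]; noncomm_ring
  have hga : g = c * c * c * (p - q1) := by
    calc g = c * (c * c * (a * a)) * p := by rw [hccaa, ch, hg]
      _ = c * c * c * (p - q1) := by rw [hap]; noncomm_ring
  have hag : p - q1 = a * a * a * g := by
    calc p - q1 = a * (a * a * c) * p := by rw [haac, hap]
      _ = a * a * a * g := by rw [hg]; noncomm_ring
  refine ⟨?_, ?_, hh2, rMul_eq hfh hhf, rMul_eq hfa haf, rAnn_eq hgh hhg, rAnn_eq hga hag⟩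
  · rw [hf, ← mul_assoc, hpcp, ← hph, mul_assoc, hc]
  · rw [hg, mul_assoc, ← mul_assoc p, hpcp, ← mul_assoc, ch]
end
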